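/- Let n ≥ 1, m ≥ 0, and ξ, ξ' ∈ ℝⁿ with (m, ξ) ≠ 0 and (m, ξ') ≠ 0 in ℝ^{1+n}. Let Φ(ζ) := ⟨ζ⟩_m = (m² + |ζ|²)^{1/2}, so that ∇Φ(ζ) = ζ/⟨ζ⟩_m, and set x := (m, ξ), y := (m, ξ') ∈ ℝ^{1+n}. Then (∇Φ(ξ) − ∇Φ(ξ')) · (ξ − ξ') = ((⟨ξ⟩_m + ⟨ξ'⟩_m)/2) · |x/|x| − y/|y||². -/

import Mathlib

open scoped RealInnerProductSpace

noncomputable section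

abbrev Euc (n : ℕ) : Type := EuclideanSpace ℝ (Fin n)

/-- `⟨ζ⟩_m = (m² + |ζ|²)^{1/2}`. -/
def hnorm {n : ℕ} (m : ℝ) (ζ : Euc n) : ℝ := Real.sqrt (m ^ 2 + ‖ζ‖ ^ 2)

/-- The vector `(r, w) ∈ ℝ^{1+n}` with the Euclidean (`L²`) norm. -/
def mk1 {n : ℕ} (r : ℝ) (w : Euc n) : WithLp 2 (ℝ × Euc n) :=
  (WithLp.equiv 2 (ℝ × Euc n)).symm (r, w)

/-!
For vectors `u`, `v` of equal norm, both `⟪u - v, r • u - s • v⟫` and `‖u - v‖ ^ 2` are multiples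
of `‖v‖ ^ 2 - ⟪u, v⟫`, with factors `r + s` and `2`. Taking for `u`, `v` the directions of `x`, `y`
and `r = ‖x‖`, `s = ‖y‖` gives the identity with `x - y` on the right of the inner product. Since
`x = (m, ξ)` and `y = (m, ξ')` have the same first coordinate, `x - y = (0, ξ - ξ')` only sees the
second component of the difference of directions, which is `∇Φ(ξ) - ∇Φ(ξ')` because `‖x‖ = ⟨ξ⟩_m`.
-/

theorem norm_toLp_real_prod {E : Type*} [SeminormedAddCommGroup E] (m : ℝ) (ζ : E) :
    ‖WithLp.toLp 2 (m, ζ)‖ = √(m ^ 2 + ‖ζ‖ ^ 2) := by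
  simp only [WithLp.prod_norm_eq_of_L2, Real.norm_eq_abs, sq_abs, WithLp.toLp_fst,
    WithLp.toLp_snd]

theorem real_inner_sub_smul_sub_smul_of_norm_eq {E : Type*} [SeminormedAddCommGroup E]
    [InnerProductSpace ℝ E] {u v : E} (h : ‖u‖ = ‖v‖) (r s : ℝ) :
    ⟪u - v, r • u - s • v⟫ = (r + s) / 2 * ‖u - v‖ ^ 2 := by
  have inner_eq : ⟪u - v, r • u - s • v⟫ = (r + s) * (‖v‖ ^ 2 - ⟪u, v⟫) := by
    simp only [inner_sub_left, inner_sub_right, real_inner_smul_right,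
      real_inner_self_eq_norm_sq, real_inner_comm u v, h]
    ring
  have norm_sq_eq : ‖u - v‖ ^ 2 = 2 * (‖v‖ ^ 2 - ⟪u, v⟫) := by
    rw [norm_sub_sq_real, h]
    ring
  rw [inner_eq, norm_sq_eq]
  ring

section InnerProductSpace

open NormedSpace (normalize norm_normalize norm_smul_normalize)

variable {E : Type*} [NormedAddCommGroup E] [InnerProductSpace ℝ E]

theorem real_inner_normalize_sub_normalize_sub {x y : E} (hx : x ≠ 0) (hy : y ≠ 0) :
    ⟪normalize x - normalize y, x - y⟫ =
      (‖x‖ + ‖y‖) / 2 * ‖normalize x - normalize y‖ ^ 2 := by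
  have norm_eq : ‖normalize x‖ = ‖normalize y‖ :=
    (norm_normalize hx).trans (norm_normalize hy).symm
  simpa only [norm_smul_normalize] using
    real_inner_sub_smul_sub_smul_of_norm_eq norm_eq ‖x‖ ‖y‖

theorem real_inner_sub_right_of_fst_eq {F : Type*} [NormedAddCommGroup F]
    [InnerProductSpace ℝ F] {x y : WithLp 2 (F × E)} (h : x.fst = y.fst) (z : WithLp 2 (F × E)) :
    ⟪z, x - y⟫ = ⟪z.snd, x.snd - y.snd⟫ := by
  have fst_sub_eq_zero : (x - y).fst = 0 := sub_eq_zero.mpr h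
  calc
    ⟪z, x - y⟫ = ⟪z.fst, (x - y).fst⟫ + ⟪z.snd, (x - y).snd⟫ := WithLp.prod_inner_apply z (x - y)
    _ = ⟪z.snd, x.snd - y.snd⟫ := by
      rw [fst_sub_eq_zero, inner_zero_right, zero_add, WithLp.sub_snd]

theorem stmt5_general (m : ℝ) (ξ ξ' : E)
    (hx : WithLp.toLp 2 (m, ξ) ≠ 0) (hy : WithLp.toLp 2 (m, ξ') ≠ 0) :
    ⟪(√(m ^ 2 + ‖ξ‖ ^ 2))⁻¹ • ξ - (√(m ^ 2 + ‖ξ'‖ ^ 2))⁻¹ • ξ', ξ - ξ'⟫ =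
      (√(m ^ 2 + ‖ξ‖ ^ 2) + √(m ^ 2 + ‖ξ'‖ ^ 2)) / 2 *
        ‖‖WithLp.toLp 2 (m, ξ)‖⁻¹ • WithLp.toLp 2 (m, ξ) -
          ‖WithLp.toLp 2 (m, ξ')‖⁻¹ • WithLp.toLp 2 (m, ξ')‖ ^ 2 := by
  set x := WithLp.toLp 2 (m, ξ)
  set y := WithLp.toLp 2 (m, ξ')
  have fst_eq : x.fst = y.fst := rfl
  rw [← norm_toLp_real_prod m ξ, ← norm_toLp_real_prod m ξ']
  calc
    ⟪‖x‖⁻¹ • ξ - ‖y‖⁻¹ • ξ', ξ - ξ'⟫ = ⟪‖x‖⁻¹ • x - ‖y‖⁻¹ • y, x - y⟫ :=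
      (real_inner_sub_right_of_fst_eq fst_eq (‖x‖⁻¹ • x - ‖y‖⁻¹ • y)).symm
    _ = (‖x‖ + ‖y‖) / 2 * ‖‖x‖⁻¹ • x - ‖y‖⁻¹ • y‖ ^ 2 :=
      real_inner_normalize_sub_normalize_sub hx hy

end InnerProductSpace

/-- **The curvature identity for the Klein-Gordon phase `Φ(ζ) = ⟨ζ⟩_m` (Section 2.2):**
`(∇Φ(ξ) − ∇Φ(ξ'))·(ξ − ξ') = ((⟨ξ⟩_m + ⟨ξ'⟩_m)/2)·|x/|x| − y/|y||²` with
`x = (m, ξ)`, `y = (m, ξ')`. -/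
theorem stmt5 {n : ℕ} (hn : 1 ≤ n) (m : ℝ) (hm : 0 ≤ m) (ξ ξ' : Euc n)
    (hx : mk1 m ξ ≠ 0) (hy : mk1 m ξ' ≠ 0) :
    ⟪(hnorm m ξ)⁻¹ • ξ - (hnorm m ξ')⁻¹ • ξ', ξ - ξ'⟫
      = (hnorm m ξ + hnorm m ξ') / 2 *
          ‖‖mk1 m ξ‖⁻¹ • mk1 m ξ - ‖mk1 m ξ'‖⁻¹ • mk1 m ξ'‖ ^ 2 :=
  stmt5_general m ξ ξ' hx hy
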